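/- arXiv:2602.00906 — 2 statements merged into one kernel-verified Lean document; each statement's English description precedes it below -/
import Mathlib

section
/- Fix error metrics d^K, d^N satisfying the stated assumptions and error levels εK, εN ≥ 0 such that C_K(εK) and C_N(εN) are nonempty. For each p ∈ (0,1), the infimum defining R_p(εK, εN) = inf{F_p(μK, μN) : (μK, μN) ∈ C_K(εK) × C_N(εN)} is attained, and as p → 0⁺, R_p(εK, εN) converges to min{KL(μK ‖ μN) : (μK, μN) ∈ C_K(εK) × C_N(εN)}. -/
/- STATEMENT 6: For each p ∈ (0,1) the infimum defining R_p(εK, εN) is attained, and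
   as p → 0⁺, R_p(εK, εN) converges to min{KL(μK ‖ μN)} over the feasible region
   (which is attained). -/

open MeasureTheory Filter Topology
open scoped ENNReal

abbrev I01 : Set ℝ := Set.Icc 0 1

open Classical in
/-- Kullback–Leibler divergence with logarithm base 2, valued in `EReal`. -/
noncomputable def klDiv2 {α : Type*} [MeasurableSpace α] (μ ν : Measure α) : EReal :=
  if μ ≪ ν ∧ Integrable (fun x => Real.logb 2 ((μ.rnDeriv ν x).toReal)) μ
  then ((∫ x, Real.logb 2 ((μ.rnDeriv ν x).toReal) ∂μ : ℝ) : EReal)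
  else ⊤

noncomputable def mix {α : Type*} [MeasurableSpace α] (p : ℝ) (μ ν : Measure α) : Measure α :=
  (ENNReal.ofReal p) • μ + (ENNReal.ofReal (1 - p)) • ν

/-- `F_p(μK, μN)`, with `F_0(μK, μN) = KL(μK ‖ μN)`. -/
noncomputable def Fp {α : Type*} [MeasurableSpace α] (p : ℝ) (μK μN : Measure α) : EReal :=
  if p = 0 then klDiv2 μK μN
  else klDiv2 μK (mix p μK μN) + (((1 - p) / p : ℝ) : EReal) * klDiv2 μN (mix p μK μN)

/-- The feasibility predicate: `(μK, μN)` is a pair of probability measures on `[0,1]`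
satisfying the error constraints `E_{μK}[d^K] ≤ εK` and `E_{μN}[d^N] ≤ εN`. -/
def Feasible (dK dN : I01 → ℝ≥0∞) (εK εN : ℝ) (μK μN : Measure I01) : Prop :=
  IsProbabilityMeasure μK ∧ IsProbabilityMeasure μN ∧
    (∫⁻ x, dK x ∂μK) ≤ ENNReal.ofReal εK ∧ (∫⁻ x, dN x ∂μN) ≤ ENNReal.ofReal εN

/-- The rate function `R_p(εK, εN) = inf{F_p(μK, μN) : (μK, μN) feasible}`. -/
noncomputable def Rp (dK dN : I01 → ℝ≥0∞) (εK εN : ℝ) (p : ℝ) : EReal :=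
  sInf {e : EReal | ∃ μK μN : Measure I01, Feasible dK dN εK εN μK μN ∧ Fp p μK μN = e}


open InformationTheory

lemma integrable_cont {f : I01 → ℝ} (hf : Continuous f) (μ : Measure I01) [IsFiniteMeasure μ] :
    Integrable f μ :=
  (BoundedContinuousFunction.mkOfCompact ⟨f, hf⟩).integrable μ

lemma young_klFun (x y : ℝ) (hx : 0 ≤ x) : x * y - (Real.exp y - 1) ≤ klFun x := by
  unfold klFun
  rcases hx.eq_or_lt with rfl | hx
  · have := Real.exp_pos y
    simp; linarith
  · have h := Real.add_one_le_exp (y - Real.log x)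
    rw [Real.exp_sub, Real.exp_log hx, le_div_iff₀ hx] at h
    nlinarith

/-- the dual functional -/
noncomputable def dv (g : I01 → ℝ) (μ ν : Measure I01) : ℝ :=
  ∫ x, g x ∂μ - ∫ x, (Real.exp (g x) - 1) ∂ν

lemma dv_of_ac {μ ν : Measure I01} [IsFiniteMeasure μ] [IsFiniteMeasure ν] (h : μ ≪ ν)
    {g : I01 → ℝ} (hg : Measurable g) {B : ℝ} (hB : ∀ x, |g x| ≤ B) :
    Integrable (fun x => (μ.rnDeriv ν x).toReal * g x - (Real.exp (g x) - 1)) ν ∧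
    dv g μ ν = ∫ x, ((μ.rnDeriv ν x).toReal * g x - (Real.exp (g x) - 1)) ∂ν := by
  have h1 : Integrable g μ := Integrable.of_bound hg.aestronglyMeasurable B (ae_of_all _ hB)
  have h2 : Integrable (fun x => (μ.rnDeriv ν x).toReal * g x) ν :=
    (integrable_rnDeriv_smul_iff h).2 h1
  have h3 : Integrable (fun x => Real.exp (g x) - 1) ν := by
    refine Integrable.sub ?_ (integrable_const _)
    refine Integrable.of_bound (Real.measurable_exp.comp hg).aestronglyMeasurable (Real.exp B)
      (ae_of_all _ fun x => ?_)
    rw [Real.norm_eq_abs, abs_of_pos (Real.exp_pos _)]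
    exact Real.exp_le_exp.2 ((le_abs_self _).trans (hB x))
  refine ⟨h2.sub h3, ?_⟩
  rw [integral_sub h2 h3, dv]
  congr 1
  exact (integral_rnDeriv_smul h).symm

lemma dv_le_klDiv (μ ν : Measure I01) [IsFiniteMeasure μ] [IsFiniteMeasure ν]
    {g : I01 → ℝ} (hg : Measurable g) {B : ℝ} (hB : ∀ x, |g x| ≤ B) :
    ENNReal.ofReal (dv g μ ν) ≤ klDiv μ ν := by
  by_cases h : μ ≪ ν
  swap
  · rw [klDiv_of_not_ac h]; exact le_top
  rw [klDiv_eq_lintegral_klFun_of_ac h, (dv_of_ac h hg hB).2]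
  rw [integral_eq_lintegral_pos_part_sub_lintegral_neg_part (dv_of_ac h hg hB).1]
  refine (ENNReal.ofReal_le_ofReal (sub_le_self _ ENNReal.toReal_nonneg)).trans ?_
  refine ENNReal.ofReal_toReal_le.trans ?_
  exact lintegral_mono fun x => ENNReal.ofReal_le_ofReal (young_klFun _ _ ENNReal.toReal_nonneg)

lemma exp_lip {B x y : ℝ} (hx : |x| ≤ B) (hy : |y| ≤ B) :
    |Real.exp x - Real.exp y| ≤ Real.exp B * |x - y| := by
  have key : ∀ a b : ℝ, a ≤ B → b ≤ a → Real.exp a - Real.exp b ≤ Real.exp B * (a - b) := by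
    intro a b ha hba
    have h := Real.add_one_le_exp (b - a)
    rw [Real.exp_sub, le_div_iff₀ (Real.exp_pos a)] at h
    have h2 := Real.exp_le_exp.2 ha
    nlinarith
  rcases le_total x y with h | h
  · rw [abs_sub_comm, abs_sub_comm x, abs_of_nonneg (sub_nonneg.2 (Real.exp_le_exp.2 h)),
      abs_of_nonneg (sub_nonneg.2 h)]
    exact key y x (abs_le.1 hy).2 h
  · rw [abs_of_nonneg (sub_nonneg.2 (Real.exp_le_exp.2 h)), abs_of_nonneg (sub_nonneg.2 h)]
    exact key x y (abs_le.1 hx).2 h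

lemma dv_meas_le {μ ν : Measure I01} [IsFiniteMeasure μ] [IsFiniteMeasure ν] {S : ℝ}
    (hS : ∀ g : C(I01, ℝ), dv g μ ν ≤ S) {g : I01 → ℝ} (hg : Measurable g) {B : ℝ}
    (hB : ∀ x, |g x| ≤ B) : dv g μ ν ≤ S := by
  have hB0 : 0 ≤ B := (abs_nonneg _).trans (hB 0)
  have hgi : ∀ (ρ : Measure I01) [IsFiniteMeasure ρ], Integrable g ρ := fun ρ _ =>
    Integrable.of_bound hg.aestronglyMeasurable B (ae_of_all _ hB)
  have hgei : ∀ (ρ : Measure I01) [IsFiniteMeasure ρ], Integrable (fun x => Real.exp (g x)) ρ := by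
    intro ρ _
    refine Integrable.of_bound (Real.measurable_exp.comp hg).aestronglyMeasurable (Real.exp B)
      (ae_of_all _ fun x => ?_)
    rw [Real.norm_eq_abs, abs_of_pos (Real.exp_pos _)]
    exact Real.exp_le_exp.2 ((le_abs_self _).trans (hB x))
  refine le_of_forall_pos_le_add fun ε hε => ?_
  have hC : 0 < 1 + Real.exp B := by positivity
  obtain ⟨h, hh, hhi⟩ := (hgi (μ + ν)).exists_boundedContinuous_integral_sub_le
    (ε := ε / (1 + Real.exp B)) (by positivity)
  let k : C(I01, ℝ) := ⟨fun x => max (-B) (min B (h x)), by fun_prop⟩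
  have hkB : ∀ x, |k x| ≤ B := fun x => by
    rw [abs_le]; exact ⟨le_max_left _ _, max_le (by linarith) (min_le_left _ _)⟩
  have hk : ∀ x, |g x - k x| ≤ |g x - h x| := fun x => by
    have h1 := abs_le.1 (hB x)
    have : g x = max (-B) (min B (g x)) := by rw [min_eq_right h1.2, max_eq_right h1.1]
    conv_lhs => rw [this]
    have e1 : |max (-B) (min B (g x)) - max (-B) (min B (h x))|
        ≤ |min B (g x) - min B (h x)| := by
      simpa using abs_max_sub_max_le_max (-B) (min B (g x)) (-B) (min B (h x))
    exact e1.trans (by simpa using abs_min_sub_min_le_max B (g x) B (h x))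
  have hki : ∀ (ρ : Measure I01) [IsFiniteMeasure ρ], Integrable k ρ := fun ρ _ =>
    integrable_cont k.continuous ρ
  have hkei : ∀ (ρ : Measure I01) [IsFiniteMeasure ρ], Integrable (fun x => Real.exp (k x)) ρ :=
    fun ρ _ => integrable_cont (by fun_prop) ρ
  have hd : ∫ x, |g x - k x| ∂μ + ∫ x, |g x - k x| ∂ν ≤ ε / (1 + Real.exp B) := by
    have := integral_add_measure (f := fun x => |g x - k x|)
      ((hgi μ).sub (hki μ)).abs ((hgi ν).sub (hki ν)).abs
    rw [← this]
    refine le_trans ?_ hh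
    exact integral_mono ((hgi _).sub (hki _)).abs ((hgi _).sub hhi).abs hk
  have e1 : ∫ x, g x ∂μ - ∫ x, k x ∂μ ≤ ∫ x, |g x - k x| ∂μ := by
    rw [← integral_sub (hgi μ) (hki μ)]
    exact integral_mono ((hgi μ).sub (hki μ)) ((hgi μ).sub (hki μ)).abs fun x => le_abs_self _
  have e2 : ∫ x, (Real.exp (k x) - 1) ∂ν - ∫ x, (Real.exp (g x) - 1) ∂ν
      ≤ Real.exp B * ∫ x, |g x - k x| ∂ν := by
    have := integral_sub (f := fun x => Real.exp (k x) - 1) (g := fun x => Real.exp (g x) - 1)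
      ((hkei ν).sub (integrable_const _)) ((hgei ν).sub (integrable_const _))
    rw [← this, ← integral_const_mul]
    refine integral_mono (((hkei ν).sub (integrable_const _)).sub
      ((hgei ν).sub (integrable_const _))) (((hgi ν).sub (hki ν)).abs.const_mul _) fun x => ?_
    have := exp_lip (hB x) (hkB x)
    have h2 := neg_abs_le (Real.exp (g x) - Real.exp (k x))
    simp only
    linarith
  have n1 : 0 ≤ ∫ x, |g x - k x| ∂μ := integral_nonneg fun _ => abs_nonneg _
  have n2 : 0 ≤ ∫ x, |g x - k x| ∂ν := integral_nonneg fun _ => abs_nonneg _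
  have hSk := hS k
  rw [le_div_iff₀ hC] at hd
  have := Real.exp_pos B
  unfold dv at hSk ⊢
  nlinarith [mul_nonneg this.le n1]

lemma ac_of_dv_le {μ ν : Measure I01} [IsFiniteMeasure μ] [IsFiniteMeasure ν] {S : ℝ}
    (hS : ∀ g : C(I01, ℝ), dv g μ ν ≤ S) : μ ≪ ν := by
  refine Measure.AbsolutelyContinuous.mk fun s hs h0 => ?_
  have key : ∀ t : ℝ, t * μ.real s ≤ S := by
    intro t
    have := dv_meas_le hS (g := s.indicator fun _ => t) (measurable_const.indicator hs)
      (B := |t|) (fun x => by by_cases hx : x ∈ s <;> simp [hx])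
    rw [dv, integral_indicator_const _ hs] at this
    have h2 : ∫ x, (Real.exp (s.indicator (fun _ => t) x) - 1) ∂ν = 0 := by
      refine integral_eq_zero_of_ae ?_
      have : ∀ᵐ x ∂ν, x ∉ s := by simpa [ae_iff] using h0
      filter_upwards [this] with x hx
      simp [hx]
    rw [h2, smul_eq_mul] at this
    linarith
  by_contra hne
  have hpos : 0 < μ.real s := ENNReal.toReal_pos hne (measure_ne_top _ _)
  have := key ((S + 1) / μ.real s)
  rw [div_mul_cancel₀ _ hpos.ne'] at this
  linarith

noncomputable def clampLog (n : ℕ) (x : ℝ) : ℝ :=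
  Real.log (max ((n + 1 : ℝ)⁻¹) (min (n + 1 : ℝ) x))

lemma clampLog_bdd (n : ℕ) (x : ℝ) : |clampLog n x| ≤ Real.log (n + 1) := by
  have hn : (0 : ℝ) < n + 1 := by positivity
  have hn1 : ((n : ℝ) + 1)⁻¹ ≤ n + 1 := by
    have : (1 : ℝ) ≤ n + 1 := by simp
    exact (inv_le_one_of_one_le₀ this).trans this
  unfold clampLog
  rw [abs_le]
  constructor
  · rw [← Real.log_inv]
    exact Real.log_le_log (by positivity) (le_max_left _ _)
  · exact Real.log_le_log (lt_of_lt_of_le (by positivity) (le_max_left _ _))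
      (max_le hn1 (min_le_left _ _))

lemma clampLog_nonneg (n : ℕ) (x : ℝ) :
    0 ≤ x * clampLog n x - (Real.exp (clampLog n x) - 1) := by
  have hn : (0 : ℝ) < n + 1 := by positivity
  have h1 : (1 : ℝ) ≤ n + 1 := by simp
  have h2 : ((n : ℝ) + 1)⁻¹ ≤ 1 := inv_le_one_of_one_le₀ h1
  have hi : 0 < ((n : ℝ) + 1)⁻¹ := by positivity
  unfold clampLog
  set c := max ((n + 1 : ℝ)⁻¹) (min (n + 1 : ℝ) x) with hc
  have hc0 : 0 < c := lt_of_lt_of_le hi (le_max_left _ _)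
  rw [Real.exp_log hc0]
  have hk : 0 ≤ klFun c := klFun_nonneg hc0.le
  unfold klFun at hk
  -- (x - c) * log c ≥ 0
  have : 0 ≤ (x - c) * Real.log c := by
    rcases le_total c x with h | h
    · rcases h.eq_or_lt with h | h
      · rw [h]; simp
      refine mul_nonneg (by linarith) (Real.log_nonneg ?_)
      have : n + 1 ≤ x := by
        by_contra hlt
        rw [min_eq_right (not_le.1 hlt).le] at hc
        exact absurd (le_max_right _ _ : x ≤ max ((n + 1 : ℝ)⁻¹) x) (by rw [← hc]; linarith)
      rw [hc, min_eq_left this]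
      exact h1.trans (le_max_right _ _)
    · rcases h.eq_or_lt with h | h
      · rw [h]; simp
      refine mul_nonneg_of_nonpos_of_nonpos (by linarith) (Real.log_nonpos hc0.le ?_)
      have : c = (n + 1 : ℝ)⁻¹ := by
        rcases max_choice ((n + 1 : ℝ)⁻¹) (min (n + 1 : ℝ) x) with h' | h'
        · rw [hc, h']
        · rw [h'] at hc
          exact absurd (min_le_right (n + 1 : ℝ) x) (by rw [← hc]; linarith)
      rw [this]; exact h2
  nlinarith

lemma clampLog_tendsto (x : ℝ) (hx : 0 ≤ x) :
    Tendsto (fun n => x * clampLog n x - (Real.exp (clampLog n x) - 1)) atTop (𝓝 (klFun x)) := by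
  rcases hx.eq_or_lt with rfl | hx
  · have : ∀ n : ℕ, (0 : ℝ) * clampLog n 0 - (Real.exp (clampLog n 0) - 1)
        = 1 - ((n : ℝ) + 1)⁻¹ := by
      intro n
      have hn : (0 : ℝ) < n + 1 := by positivity
      unfold clampLog
      rw [min_eq_right hn.le, max_eq_left (by positivity), Real.exp_log (by positivity)]
      ring
    simp_rw [this, klFun_zero]
    have := (tendsto_one_div_add_atTop_nhds_zero_nat (𝕜 := ℝ)).const_sub 1
    simpa using this
  · refine tendsto_const_nhds.congr' ?_
    have e1 := eventually_ge_atTop ⌈x⌉₊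
    have e2 := eventually_ge_atTop ⌈x⁻¹⌉₊
    filter_upwards [e1, e2] with n h1 h2
    have h1' : x ≤ n := (Nat.le_ceil x).trans (by exact_mod_cast h1)
    have h2' : x⁻¹ ≤ n := (Nat.le_ceil _).trans (by exact_mod_cast h2)
    unfold clampLog
    rw [min_eq_right (by linarith), max_eq_right (inv_le_of_inv_le₀ hx (by linarith)),
      Real.exp_log hx, klFun]
    ring

lemma klDiv_le_of_dv_le {μ ν : Measure I01} [IsFiniteMeasure μ] [IsFiniteMeasure ν] {S : ℝ}
    (hS : ∀ g : C(I01, ℝ), dv g μ ν ≤ S) : klDiv μ ν ≤ ENNReal.ofReal S := by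
  have hac := ac_of_dv_le hS
  rw [klDiv_eq_lintegral_klFun_of_ac hac]
  set f := fun x => (μ.rnDeriv ν x).toReal with hf
  have hfm : Measurable f := by fun_prop
  have hcm : ∀ n, Measurable (clampLog n) := fun n => by unfold clampLog; fun_prop
  have hm : ∀ n, Measurable fun x => clampLog n (f x) := fun n => (hcm n).comp hfm
  have h1 : ∀ n, ∫⁻ x, ENNReal.ofReal (f x * clampLog n (f x)
      - (Real.exp (clampLog n (f x)) - 1)) ∂ν ≤ ENNReal.ofReal S := by
    intro n
    obtain ⟨hi, he⟩ := dv_of_ac hac (hm n) (fun x => clampLog_bdd n (f x))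
    rw [← ofReal_integral_eq_lintegral_ofReal hi
      (ae_of_all _ fun x => clampLog_nonneg n _), ← he]
    exact ENNReal.ofReal_le_ofReal (dv_meas_le hS (hm n) (fun x => clampLog_bdd n (f x)))
  calc ∫⁻ x, ENNReal.ofReal (klFun (f x)) ∂ν
      = ∫⁻ x, liminf (fun n => ENNReal.ofReal (f x * clampLog n (f x)
      - (Real.exp (clampLog n (f x)) - 1))) atTop ∂ν := by
        refine lintegral_congr fun x => ?_
        exact ((ENNReal.tendsto_ofReal
          (clampLog_tendsto (f x) ENNReal.toReal_nonneg)).liminf_eq).symm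
    _ ≤ liminf (fun n => ∫⁻ x, ENNReal.ofReal (f x * clampLog n (f x)
      - (Real.exp (clampLog n (f x)) - 1)) ∂ν) atTop :=
        lintegral_liminf_le fun n => by
          have := hm n
          fun_prop
    _ ≤ ENNReal.ofReal S := by
        refine (liminf_le_liminf (Eventually.of_forall h1)).trans ?_
        simp

lemma klDiv_eq_iSup (μ ν : Measure I01) [IsFiniteMeasure μ] [IsFiniteMeasure ν] :
    klDiv μ ν = ⨆ g : C(I01, ℝ), ENNReal.ofReal (dv g μ ν) := by
  apply le_antisymm
  · by_cases htop : (⨆ g : C(I01, ℝ), ENNReal.ofReal (dv g μ ν)) = ⊤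
    · rw [htop]; exact le_top
    · rw [← ENNReal.ofReal_toReal htop]
      refine klDiv_le_of_dv_le fun g => ?_
      rw [← ENNReal.ofReal_le_iff_le_toReal htop]
      exact le_iSup (fun g : C(I01, ℝ) => ENNReal.ofReal (dv g μ ν)) g
  · refine iSup_le fun g => ?_
    exact dv_le_klDiv μ ν g.continuous.measurable (B := ‖g‖) (fun x => g.norm_coe_le_norm x)

instance mix_isFinite (p : ℝ) (μ ν : Measure I01) [IsFiniteMeasure μ] [IsFiniteMeasure ν] :
    IsFiniteMeasure (mix p μ ν) := by
  have h1 : IsFiniteMeasure (ENNReal.ofReal p • μ) := μ.smul_finite ENNReal.ofReal_ne_top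
  have h2 : IsFiniteMeasure (ENNReal.ofReal (1 - p) • ν) := ν.smul_finite ENNReal.ofReal_ne_top
  unfold mix
  infer_instance

lemma mix_isProb {p : ℝ} (hp : p ∈ Set.Icc (0 : ℝ) 1) (μ ν : Measure I01)
    [IsProbabilityMeasure μ] [IsProbabilityMeasure ν] : IsProbabilityMeasure (mix p μ ν) := by
  constructor
  simp only [mix, Measure.add_apply, Measure.smul_apply, measure_univ, smul_eq_mul, mul_one]
  rw [← ENNReal.ofReal_add hp.1 (by linarith [hp.2])]
  simp

lemma integral_mix {p : ℝ} (hp : p ∈ Set.Icc (0 : ℝ) 1) (μ ν : Measure I01)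
    [IsFiniteMeasure μ] [IsFiniteMeasure ν] {f : I01 → ℝ} (hf : Continuous f) :
    ∫ x, f x ∂(mix p μ ν) = p * ∫ x, f x ∂μ + (1 - p) * ∫ x, f x ∂ν := by
  unfold mix
  rw [integral_add_measure, integral_smul_measure, integral_smul_measure,
    ENNReal.toReal_ofReal hp.1, ENNReal.toReal_ofReal (by linarith [hp.2])]
  · rfl
  · exact (integrable_cont hf μ).smul_measure ENNReal.ofReal_ne_top
  · exact (integrable_cont hf ν).smul_measure ENNReal.ofReal_ne_top

lemma pointwise_mix {p r b : ℝ} (hp : 0 < p) (hr : 0 ≤ r) (hb : 0 ≤ b)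
    (h : p * (r * b) + (1 - p) * b = 1) :
    klFun (r * b) + (1 - p) / p * klFun b ≤ b * klFun r := by
  have hb' : 0 < b := by
    rcases hb.eq_or_lt with rfl | h'
    · simp at h
    · exact h'
  have hlog := Real.log_le_sub_one_of_pos hb'
  rw [← mul_le_mul_iff_right₀ hp]
  have : p * (klFun (r * b) + (1 - p) / p * klFun b) = p * klFun (r * b) + (1 - p) * klFun b := by
    field_simp
  rw [this]
  have hl : r * b * Real.log (r * b) = r * b * (Real.log r + Real.log b) := by
    rcases hr.eq_or_lt with rfl | hr
    · simp
    · rw [Real.log_mul hr.ne' hb'.ne']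
  unfold klFun
  rw [hl]
  have e : p * (r * b * (Real.log r + Real.log b) + 1 - r * b) +
      (1 - p) * (b * Real.log b + 1 - b)
      = p * r * b * Real.log r + (p * (r * b) + (1 - p) * b) * Real.log b + 1
        - (p * (r * b) + (1 - p) * b) := by ring
  rw [e, h]
  have e2 : p * (b * (r * Real.log r + 1 - r))
    = p * r * b * Real.log r + b - (p * (r * b) + (1 - p) * b) := by ring
  rw [e2, h]
  linarith

lemma klDiv_mix_le {p : ℝ} (hp : p ∈ Set.Ioo (0 : ℝ) 1) (K N : Measure I01)
    [IsProbabilityMeasure K] [IsProbabilityMeasure N] :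
    klDiv K (mix p K N) + ENNReal.ofReal ((1 - p) / p) * klDiv N (mix p K N) ≤ klDiv K N := by
  obtain ⟨hp0, hp1⟩ := hp
  by_cases hKN : K ≪ N
  swap
  · rw [klDiv_of_not_ac hKN]; exact le_top
  have hp0' : ENNReal.ofReal p ≠ 0 := by simpa using hp0
  have hp1' : ENNReal.ofReal (1 - p) ≠ 0 := by simpa using hp1
  have := mix_isProb ⟨hp0.le, hp1.le⟩ K N
  have hKM : K ≪ mix p K N := by
    refine Measure.AbsolutelyContinuous.mk fun s _ h => ?_
    simp [mix, hp0'] at h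
    first | exact h.1 | (rcases h with ⟨h, _⟩; rcases h with h | h; linarith; exact h)
  have hNM : N ≪ mix p K N := by
    refine Measure.AbsolutelyContinuous.mk fun s _ h => ?_
    simp [mix, hp1'] at h
    first | exact h.2 | (rcases h with ⟨_, h⟩; rcases h with h | h; linarith; exact h)
  set M := mix p K N with hM
  rw [klDiv_eq_lintegral_klFun_of_ac hKM, klDiv_eq_lintegral_klFun_of_ac hNM,
    klDiv_eq_lintegral_klFun_of_ac hKN, ← lintegral_rnDeriv_mul hNM
      (f := fun x => ENNReal.ofReal (klFun (K.rnDeriv N x).toReal)) (by fun_prop),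
    ← lintegral_const_mul _ (by fun_prop), ← lintegral_add_left (by fun_prop)]
  refine lintegral_mono_ae ?_
  have a1 : K.rnDeriv N * N.rnDeriv M =ᵐ[M] K.rnDeriv M := Measure.rnDeriv_mul_rnDeriv hKN
  have a2 : (fun x => ENNReal.ofReal p * K.rnDeriv M x + ENNReal.ofReal (1 - p) * N.rnDeriv M x)
      =ᵐ[M] 1 := by
    have f1 : IsFiniteMeasure (ENNReal.ofReal p • K) := K.smul_finite ENNReal.ofReal_ne_top
    have f2 : IsFiniteMeasure (ENNReal.ofReal (1 - p) • N) := N.smul_finite ENNReal.ofReal_ne_top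
    have h0 := Measure.rnDeriv_add' (ENNReal.ofReal p • K) (ENNReal.ofReal (1 - p) • N) M
    have h1 := Measure.rnDeriv_smul_left_of_ne_top K M (r := ENNReal.ofReal p)
      ENNReal.ofReal_ne_top
    have h2 := Measure.rnDeriv_smul_left_of_ne_top N M (r := ENNReal.ofReal (1 - p))
      ENNReal.ofReal_ne_top
    have h3 : (ENNReal.ofReal p • K + ENNReal.ofReal (1 - p) • N).rnDeriv M =ᵐ[M] fun _ => 1 :=
      Measure.rnDeriv_self M
    filter_upwards [h0, h1, h2, h3] with x e0 e1 e2 e3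
    rw [e3] at e0
    simp only [Pi.add_apply, e1, e2] at e0
    simpa using e0.symm
  have a3 := K.rnDeriv_lt_top M
  have a4 := N.rnDeriv_lt_top M
  have a5 := hNM.ae_le
  filter_upwards [a1, a2, a3, a4] with x e1 e2 e3 e4
  simp only [Pi.mul_apply, Pi.one_apply] at e1 e2
  have e5 : (K.rnDeriv M x).toReal = (K.rnDeriv N x).toReal * (N.rnDeriv M x).toReal := by
    rw [← e1, ENNReal.toReal_mul]
  have e6 := congrArg ENNReal.toReal e2
  rw [ENNReal.toReal_add (ENNReal.mul_ne_top ENNReal.ofReal_ne_top e3.ne)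
    (ENNReal.mul_ne_top ENNReal.ofReal_ne_top e4.ne), ENNReal.toReal_mul, ENNReal.toReal_mul,
    ENNReal.toReal_ofReal hp0.le, ENNReal.toReal_ofReal (by linarith), e5, ENNReal.toReal_one] at e6
  have key := pointwise_mix hp0 ENNReal.toReal_nonneg ENNReal.toReal_nonneg e6
  have hc : 0 ≤ (1 - p) / p := div_nonneg (by linarith) hp0.le
  conv_rhs => rw [← ENNReal.ofReal_toReal e4.ne]
  rw [e5, ← ENNReal.ofReal_mul hc, ← ENNReal.ofReal_mul ENNReal.toReal_nonneg,
    ← ENNReal.ofReal_add (klFun_nonneg (by positivity))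
      (mul_nonneg hc (klFun_nonneg ENNReal.toReal_nonneg))]
  exact ENNReal.ofReal_le_ofReal key

/-! ### semicontinuity -/

abbrev PM := ProbabilityMeasure I01

noncomputable def GK (q : ℝ × PM × PM) : ℝ≥0∞ :=
  ⨆ g : C(I01, ℝ), ENNReal.ofReal (∫ x, g x ∂(q.2.1 : Measure I01) -
    (q.1 * ∫ x, (Real.exp (g x) - 1) ∂(q.2.1 : Measure I01) +
      (1 - q.1) * ∫ x, (Real.exp (g x) - 1) ∂(q.2.2 : Measure I01)))

noncomputable def GN (q : ℝ × PM × PM) : ℝ≥0∞ :=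
  ⨆ g : C(I01, ℝ), ENNReal.ofReal (∫ x, g x ∂(q.2.2 : Measure I01) -
    (q.1 * ∫ x, (Real.exp (g x) - 1) ∂(q.2.1 : Measure I01) +
      (1 - q.1) * ∫ x, (Real.exp (g x) - 1) ∂(q.2.2 : Measure I01)))

lemma GK_eq {p : ℝ} (hp : p ∈ Set.Icc (0 : ℝ) 1) (K N : PM) :
    GK (p, K, N) = klDiv (K : Measure I01) (mix p K N) := by
  rw [klDiv_eq_iSup]
  unfold GK dv
  refine iSup_congr fun g => ?_
  rw [integral_mix hp _ _ (by fun_prop)]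

lemma GN_eq {p : ℝ} (hp : p ∈ Set.Icc (0 : ℝ) 1) (K N : PM) :
    GN (p, K, N) = klDiv (N : Measure I01) (mix p K N) := by
  rw [klDiv_eq_iSup]
  unfold GN dv
  refine iSup_congr fun g => ?_
  rw [integral_mix hp _ _ (by fun_prop)]

lemma cont_int {f : I01 → ℝ} (hf : Continuous f) :
    Continuous fun μ : PM => ∫ x, f x ∂(μ : Measure I01) :=
  ProbabilityMeasure.continuous_integral_continuousMap (⟨f, hf⟩ : C(I01, ℝ))

lemma GK_lsc : LowerSemicontinuous GK := by
  refine lowerSemicontinuous_iSup fun g => Continuous.lowerSemicontinuous ?_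
  have h1 := cont_int g.continuous
  have h2 := cont_int (f := fun x => Real.exp (g x) - 1) (by fun_prop)
  have := h1.comp (continuous_fst.comp (continuous_snd (X := ℝ) (Y := PM × PM)))
  have := h2.comp (continuous_fst.comp (continuous_snd (X := ℝ) (Y := PM × PM)))
  have := h2.comp (continuous_snd.comp (continuous_snd (X := ℝ) (Y := PM × PM)))
  simp only [Function.comp_def] at *
  refine ENNReal.continuous_ofReal.comp ?_
  fun_prop

lemma GN_lsc : LowerSemicontinuous GN := by
  refine lowerSemicontinuous_iSup fun g => Continuous.lowerSemicontinuous ?_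
  have h1 := cont_int g.continuous
  have h2 := cont_int (f := fun x => Real.exp (g x) - 1) (by fun_prop)
  have := h1.comp (continuous_snd.comp (continuous_snd (X := ℝ) (Y := PM × PM)))
  have := h2.comp (continuous_fst.comp (continuous_snd (X := ℝ) (Y := PM × PM)))
  have := h2.comp (continuous_snd.comp (continuous_snd (X := ℝ) (Y := PM × PM)))
  simp only [Function.comp_def] at *
  refine ENNReal.continuous_ofReal.comp ?_
  fun_prop

/-! ### closedness of the constraint set -/

lemma closed_constraint {d : I01 → ℝ≥0∞} (hd : LowerSemicontinuous d) (ε : ℝ≥0∞) :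
    IsClosed {μ : PM | ∫⁻ x, d x ∂(μ : Measure I01) ≤ ε} := by
  apply IsSeqClosed.isClosed
  intro μs μ hμs hlim
  simp only [Set.mem_ofPred_eq] at hμs ⊢
  have hstep : ∀ n : ℕ, ∫⁻ x, min (n : ℝ≥0∞) (d x) ∂(μ : Measure I01) ≤ ε := by
    intro n
    set f : I01 → ℝ := fun x => ENNReal.truncateToReal n (d x) with hf
    have hfl : LowerSemicontinuous f :=
      (ENNReal.continuous_truncateToReal (ENNReal.natCast_ne_top n)).comp_lowerSemicontinuous hd
        (ENNReal.monotone_truncateToReal (ENNReal.natCast_ne_top n))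
    have hfn : 0 ≤ f := fun x => ENNReal.truncateToReal_nonneg
    have hfe : ∀ x, ENNReal.ofReal (f x) = min (n : ℝ≥0∞) (d x) := fun x =>
      ENNReal.ofReal_toReal (ne_top_of_le_ne_top (ENNReal.natCast_ne_top n) (min_le_left _ _))
    simp_rw [← hfe]
    have hbd : ∀ k, ∫⁻ x, ENNReal.ofReal (f x) ∂(μs k : Measure I01) ≤ ε := fun k => by
      simp_rw [hfe]
      exact (lintegral_mono fun x => min_le_right _ _).trans (hμs k)
    refine le_trans ?_ ((liminf_le_liminf (f := atTop) (Eventually.of_forall hbd)).trans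
      (by simp))
    simp_rw [lintegral_eq_lintegral_meas_lt _ (Eventually.of_forall hfn)
      hfl.measurable.aemeasurable]
    calc ∫⁻ (t : ℝ) in Set.Ioi 0, (μ : Measure I01) {a | t < f a}
        ≤ ∫⁻ (t : ℝ) in Set.Ioi 0,
          atTop.liminf (fun i ↦ (μs i : Measure I01) {a | t < f a}) :=
          lintegral_mono fun t => ProbabilityMeasure.le_liminf_measure_open_of_tendsto hlim
            (hfl.isOpen_preimage t)
      _ ≤ _ := lintegral_liminf_le (fun n ↦ Antitone.measurable (fun s t hst ↦
            measure_mono (fun ω hω ↦ lt_of_le_of_lt hst hω)))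
  have hsup : ∀ x, d x = ⨆ n : ℕ, min (n : ℝ≥0∞) (d x) := fun x => by
    rw [← iSup_inf_eq, ENNReal.iSup_natCast]; simp
  calc ∫⁻ x, d x ∂(μ : Measure I01) = ∫⁻ x, ⨆ n : ℕ, min (n : ℝ≥0∞) (d x) ∂(μ : Measure I01) :=
        lintegral_congr hsup
    _ = ⨆ n : ℕ, ∫⁻ x, min (n : ℝ≥0∞) (d x) ∂(μ : Measure I01) := by
        refine lintegral_iSup (fun n => measurable_const.min hd.measurable) ?_
        intro a b hab x
        exact min_le_min_right _ (by exact_mod_cast hab)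
    _ ≤ ε := iSup_le hstep

/-! ### base change -/

noncomputable def cLog : ℝ≥0∞ := ENNReal.ofReal (Real.log 2)⁻¹

lemma klDiv2_eq (μ ν : Measure I01) [IsProbabilityMeasure μ] [IsProbabilityMeasure ν] :
    klDiv2 μ ν = ((cLog * klDiv μ ν : ℝ≥0∞) : EReal) := by
  have hl : 0 < Real.log 2 := Real.log_pos one_lt_two
  have hfun : (fun x => Real.logb 2 ((μ.rnDeriv ν x).toReal))
      = fun x => (Real.log 2)⁻¹ * llr μ ν x := by
    ext x; rw [Real.logb, llr, div_eq_inv_mul]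
  have hint : Integrable (fun x => Real.logb 2 ((μ.rnDeriv ν x).toReal)) μ
      ↔ Integrable (llr μ ν) μ := by
    rw [hfun]
    exact integrable_const_mul_iff (IsUnit.mk0 _ (inv_pos.2 hl).ne') _
  unfold klDiv2
  rw [hint]
  split_ifs with h
  · have h0 := toReal_klDiv_of_measure_eq h.1 (by simp)
    rw [hfun, integral_const_mul, ← h0, cLog, ← ENNReal.ofReal_toReal (klDiv_ne_top h.1 h.2),
      ← ENNReal.ofReal_mul (inv_pos.2 hl).le, EReal.coe_ennreal_ofReal,
      ENNReal.ofReal_toReal (klDiv_ne_top h.1 h.2),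
      max_eq_left (mul_nonneg (inv_pos.2 hl).le ENNReal.toReal_nonneg)]
  · have : klDiv μ ν = ⊤ := by
      rw [klDiv_eq_top_iff]; tauto
    rw [this, cLog, ENNReal.mul_top (by simpa using hl)]
    rfl

lemma Fp_eq {p : ℝ} (hp : p ∈ Set.Ioo (0 : ℝ) 1) (K N : PM) :
    Fp p (K : Measure I01) N = ((cLog * (GK (p, K, N) + ENNReal.ofReal ((1 - p) / p) *
      GN (p, K, N)) : ℝ≥0∞) : EReal) := by
  have hp' : p ∈ Set.Icc (0 : ℝ) 1 := ⟨hp.1.le, hp.2.le⟩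
  have := mix_isProb hp' (K : Measure I01) N
  have hc : 0 ≤ (1 - p) / p := div_nonneg (by linarith [hp.2]) hp.1.le
  rw [Fp, if_neg hp.1.ne', klDiv2_eq, klDiv2_eq, GK_eq hp', GN_eq hp']
  have : (((1 - p) / p : ℝ) : EReal) = ((ENNReal.ofReal ((1 - p) / p) : ℝ≥0∞) : EReal) := by
    rw [EReal.coe_ennreal_ofReal, max_eq_left hc]
  rw [this, ← EReal.coe_ennreal_mul, ← EReal.coe_ennreal_add]
  congr 1
  ring

lemma klDiv2_eq_GK (K N : PM) :
    klDiv2 (K : Measure I01) N = ((cLog * GK (0, K, N) : ℝ≥0∞) : EReal) := by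
  rw [GK_eq ⟨le_rfl, zero_le_one⟩, klDiv2_eq]
  simp [mix]

lemma cmul_cont (c : ℝ≥0∞) (hc : c ≠ ⊤) :
    Continuous (fun x : ℝ≥0∞ => c * x) := ENNReal.continuous_const_mul hc

lemma coe_cmul_lsc {X : Type*} [TopologicalSpace X] {f : X → ℝ≥0∞} (hf : LowerSemicontinuous f) :
    LowerSemicontinuous fun x => ((cLog * f x : ℝ≥0∞) : EReal) := by
  refine Continuous.comp_lowerSemicontinuous
    (g := fun y : ℝ≥0∞ => ((cLog * y : ℝ≥0∞) : EReal)) ?_ hf ?_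
  · exact continuous_coe_ennreal_ereal.comp (cmul_cont _ ENNReal.ofReal_ne_top)
  · intro a b h
    exact EReal.coe_ennreal_le_coe_ennreal_iff.2 (by gcongr)

theorem stmt_6
    (dK dN : I01 → ℝ≥0∞)
    (hdK_lsc : LowerSemicontinuous dK) (hdN_lsc : LowerSemicontinuous dN)
    (hdK1 : dK ⟨1, Set.right_mem_Icc.mpr zero_le_one⟩ = 0)
    (hdN0 : dN ⟨0, Set.left_mem_Icc.mpr zero_le_one⟩ = 0)
    (hc : ∃ c : I01, dK c ≠ ⊤ ∧ dN c ≠ ⊤)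
    (εK εN : ℝ) (hεK : 0 ≤ εK) (hεN : 0 ≤ εN)
    -- nonemptiness of the feasible sets C_K(εK) and C_N(εN)
    (hCK : ∃ μ : Measure I01, IsProbabilityMeasure μ ∧ (∫⁻ x, dK x ∂μ) ≤ ENNReal.ofReal εK)
    (hCN : ∃ μ : Measure I01, IsProbabilityMeasure μ ∧ (∫⁻ x, dN x ∂μ) ≤ ENNReal.ofReal εN) :
    -- the infimum defining R_p is attained for each p ∈ (0,1)
    (∀ p ∈ Set.Ioo (0 : ℝ) 1, ∃ μK μN : Measure I01,
        Feasible dK dN εK εN μK μN ∧ Fp p μK μN = Rp dK dN εK εN p) ∧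
    -- the minimum of KL over the feasible region is attained, and R_p converges to it
    -- as p → 0⁺
    (∃ μKs μNs : Measure I01, Feasible dK dN εK εN μKs μNs ∧
      (∀ μK' μN' : Measure I01, Feasible dK dN εK εN μK' μN' →
        klDiv2 μKs μNs ≤ klDiv2 μK' μN') ∧
      Tendsto (Rp dK dN εK εN) (nhdsWithin 0 (Set.Ioi 0)) (nhds (klDiv2 μKs μNs))) := by
  let C : Set (PM × PM) := {μ : PM | ∫⁻ x, dK x ∂(μ : Measure I01) ≤ ENNReal.ofReal εK} ×ˢ
    {μ : PM | ∫⁻ x, dN x ∂(μ : Measure I01) ≤ ENNReal.ofReal εN}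
  have hCc : IsCompact C :=
    ((closed_constraint hdK_lsc _).prod (closed_constraint hdN_lsc _)).isCompact
  have hCne : C.Nonempty := by
    obtain ⟨μ, h1, h2⟩ := hCK
    obtain ⟨ν, h3, h4⟩ := hCN
    exact ⟨(⟨μ, h1⟩, ⟨ν, h3⟩), h2, h4⟩
  have feas : ∀ q ∈ C, Feasible dK dN εK εN (q.1 : Measure I01) q.2 := fun q hq =>
    ⟨inferInstance, inferInstance, hq.1, hq.2⟩
  have att : ∀ p ∈ Set.Ioo (0 : ℝ) 1, ∃ q ∈ C,
      Fp p (q.1 : Measure I01) q.2 = Rp dK dN εK εN p := by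
    intro p hp
    have hins : Continuous fun q : PM × PM => (p, q) := by fun_prop
    have hl : LowerSemicontinuous fun q : PM × PM => ((cLog * (GK (p, q) +
        ENNReal.ofReal ((1 - p) / p) * GN (p, q)) : ℝ≥0∞) : EReal) := by
      refine coe_cmul_lsc (LowerSemicontinuous.add (GK_lsc.comp hins) ?_)
      refine (cmul_cont (ENNReal.ofReal ((1 - p) / p)) ENNReal.ofReal_ne_top).comp_lowerSemicontinuous
        (GN_lsc.comp hins) ?_
      intro a b h
      dsimp only
      gcongr
    obtain ⟨q, hq, hmin⟩ := (hl.lowerSemicontinuousOn C).exists_isMinOn hCne hCc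
    refine ⟨q, hq, le_antisymm (le_sInf ?_) (sInf_le ⟨_, _, feas q hq, rfl⟩)⟩
    rintro e ⟨K, N, ⟨hK, hN, h1, h2⟩, rfl⟩
    have := hmin (show ((⟨K, hK⟩, ⟨N, hN⟩) : PM × PM) ∈ C from ⟨h1, h2⟩)
    rw [Fp_eq hp q.1 q.2]
    have e := Fp_eq hp ⟨K, hK⟩ ⟨N, hN⟩
    simp only [ProbabilityMeasure.coe_mk] at e
    rw [e]
    exact this
  refine ⟨fun p hp => ?_, ?_⟩
  · obtain ⟨q, hq, h⟩ := att p hp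
    exact ⟨_, _, feas q hq, h⟩
  have hins : Continuous fun q : PM × PM => ((0 : ℝ), q) := by fun_prop
  obtain ⟨q, hq, hmin⟩ :=
    ((coe_cmul_lsc (GK_lsc.comp hins)).lowerSemicontinuousOn C).exists_isMinOn hCne hCc
  refine ⟨q.1, q.2, feas q hq, ?_, ?_⟩
  · rintro K N ⟨hK, hN, h1, h2⟩
    have := hmin (show ((⟨K, hK⟩, ⟨N, hN⟩) : PM × PM) ∈ C from ⟨h1, h2⟩)
    rw [klDiv2_eq_GK q.1 q.2]
    have e := klDiv2_eq_GK ⟨K, hK⟩ ⟨N, hN⟩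
    simp only [ProbabilityMeasure.coe_mk] at e
    rw [e]
    exact this
  have hev : ∀ᶠ p : ℝ in 𝓝[>] 0, p ∈ Set.Ioo (0 : ℝ) 1 := Ioo_mem_nhdsGT one_pos
  rw [tendsto_order]
  constructor
  · intro a ha
    have hcpt : ∀ᶠ p : ℝ in 𝓝 0, ∀ r ∈ C, a < ((cLog * GK (p, r) : ℝ≥0∞) : EReal) := by
      refine hCc.eventually_forall_of_forall_eventually fun r hr => ?_
      have hlt : a < ((cLog * GK (0, r) : ℝ≥0∞) : EReal) := by
        rw [klDiv2_eq_GK q.1 q.2] at ha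
        exact ha.trans_le (hmin hr)
      exact coe_cmul_lsc GK_lsc (0, r) a hlt
    filter_upwards [hev, hcpt.filter_mono nhdsWithin_le_nhds] with p hp hall
    obtain ⟨r, hr, he⟩ := att p hp
    rw [← he, Fp_eq hp]
    refine (hall r hr).trans_le (EReal.coe_ennreal_le_coe_ennreal_iff.2 ?_)
    gcongr
    exact le_self_add
  · intro a ha
    filter_upwards [hev] with p hp
    refine lt_of_le_of_lt ?_ ha
    have hle : Rp dK dN εK εN p ≤ Fp p (q.1 : Measure I01) q.2 :=
      sInf_le ⟨_, _, feas q hq, rfl⟩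
    refine hle.trans ?_
    have hp' : p ∈ Set.Icc (0 : ℝ) 1 := ⟨hp.1.le, hp.2.le⟩
    rw [Fp_eq hp, klDiv2_eq, GK_eq hp', GN_eq hp']
    refine EReal.coe_ennreal_le_coe_ennreal_iff.2 ?_
    gcongr
    exact klDiv_mix_le hp _ _
end

section
/- Fix error metrics d^K, d^N satisfying the stated assumptions and error levels εK, εN ≥ 0, and suppose (μK*, μN*) ∈ C_K(εK) × C_N(εN) is the UNIQUE minimizer of KL(μK ‖ μN) over C_K(εK) × C_N(εN). Let p_j → 0 with p_j ∈ (0,1), and let μ_{K,j}, μ_{N,j} ∈ P([0,1]) satisfy limsup_j E_{μ_{K,j}}[d^K] ≤ εK, limsup_j E_{μ_{N,j}}[d^N] ≤ εN, and limsup_{j→∞} F_{p_j}(μ_{K,j}, μ_{N,j}) ≤ KL(μK* ‖ μN*). Then μ_{K,j} → μK* and μ_{N,j} → μN* in the weak-* topology (equivalently, in Wasserstein-1 distance on [0,1]). -/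
/- STATEMENT 7: If (μK*, μN*) is the unique minimizer of KL over the feasible region,
   and (p_j, μ_{K,j}, μ_{N,j}) is an asymptotically feasible and asymptotically optimal
   sequence (p_j → 0, limsup F_{p_j} ≤ KL(μK* ‖ μN*)), then μ_{K,j} → μK* and
   μ_{N,j} → μN* in the weak-* topology on P([0,1]). -/

open MeasureTheory Filter Topology
open scoped ENNReal

/-- Feasibility of a pair of probability measures on `[0,1]` for the error constraints. -/
def FeasibleP (dK dN : I01 → ℝ≥0∞) (εK εN : ℝ) (μK μN : ProbabilityMeasure I01) : Prop :=
  (∫⁻ x, dK x ∂(μK : Measure I01)) ≤ ENNReal.ofReal εK ∧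
    (∫⁻ x, dN x ∂(μN : Measure I01)) ≤ ENNReal.ofReal εN

open InformationTheory BoundedContinuousFunction in
lemma aux_young {r : ℝ} (hr : 0 ≤ r) (g : ℝ) :
    r * g - (Real.exp g - 1) ≤ klFun r := by
  unfold klFun
  rcases hr.eq_or_lt with rfl | hr
  · have := Real.exp_pos g
    simp; linarith
  · have h := Real.add_one_le_exp (g - Real.log r)
    rw [Real.exp_sub, Real.exp_log hr, le_div_iff₀ hr] at h
    nlinarith

lemma aux_klDiv2_le {α : Type*} [MeasurableSpace α] (μ ν : Measure α) (c : ℝ) :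
    klDiv2 μ ν ≤ (c : EReal) ↔
      μ ≪ ν ∧ Integrable (llr μ ν) μ ∧ ∫ x, llr μ ν x ∂μ ≤ c * Real.log 2 := by
  have hl : (0 : ℝ) < Real.log 2 := Real.log_pos (by norm_num)
  have h1 : (fun x => Real.logb 2 ((μ.rnDeriv ν x).toReal))
      = fun x => llr μ ν x / Real.log 2 := by
    ext x; simp [Real.logb, llr]
  have h2 : Integrable (fun x => llr μ ν x / Real.log 2) μ ↔ Integrable (llr μ ν) μ := by
    constructor
    · intro h
      have := h.mul_const (Real.log 2)
      simpa [div_mul_cancel₀ _ hl.ne'] using this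
    · intro h; exact h.div_const _
  unfold klDiv2
  rw [h1, h2, integral_div]
  split_ifs with h
  · simp only [h, true_and, EReal.coe_le_coe_iff]
    rw [div_le_iff₀ hl]
  · simp only [top_le_iff, EReal.coe_ne_top, false_iff]
    tauto

lemma aux_klDiv2_nonneg {α : Type*} [MeasurableSpace α] (μ ν : Measure α)
    [IsProbabilityMeasure μ] [IsProbabilityMeasure ν] : 0 ≤ klDiv2 μ ν := by
  by_contra hlt
  push Not at hlt
  obtain ⟨c, hc1, hc2⟩ := EReal.lt_iff_exists_real_btwn.1 hlt
  obtain ⟨hac, hint, hle⟩ := (aux_klDiv2_le μ ν c).1 hc1.le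
  have h0 := InformationTheory.integral_llr_add_sub_measure_univ_nonneg hac hint
  have hc : c < 0 := by exact_mod_cast hc2
  have hl : (0 : ℝ) < Real.log 2 := Real.log_pos (by norm_num)
  simp at h0
  nlinarith

lemma aux_exp_bcf {α : Type*} [MeasurableSpace α] (ν : Measure α) [IsFiniteMeasure ν]
    {g : α → ℝ} (hg : Measurable g) {M : ℝ} (hM : ∀ x, |g x| ≤ M) :
    Integrable g ν ∧ Integrable (fun x => Real.exp (g x) - 1) ν := by
  constructor
  · exact Integrable.of_bound hg.aestronglyMeasurable M (ae_of_all _ (by simpa using hM))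
  · refine Integrable.sub ?_ (integrable_const _)
    refine Integrable.of_bound (by fun_prop) (Real.exp M) (ae_of_all _ fun x => ?_)
    rw [Real.norm_eq_abs, Real.abs_exp]
    exact Real.exp_le_exp.2 ((le_abs_self _).trans (hM x))

lemma aux_upper {α : Type*} [MeasurableSpace α] (μ ν : Measure α)
    [IsProbabilityMeasure μ] [IsProbabilityMeasure ν] {c : ℝ} (h : klDiv2 μ ν ≤ (c : EReal))
    {g : α → ℝ} (hg : Measurable g) {M : ℝ} (hM : ∀ x, |g x| ≤ M) :
    ∫ x, g x ∂μ - ∫ x, (Real.exp (g x) - 1) ∂ν ≤ c * Real.log 2 := by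
  obtain ⟨hac, hint, hle⟩ := (aux_klDiv2_le μ ν c).1 h
  refine le_trans ?_ hle
  have h1 := InformationTheory.integral_klFun_rnDeriv hac hint
  have h2 := (InformationTheory.integrable_klFun_rnDeriv_iff hac).2 hint
  simp at h1
  rw [← h1, ← integral_rnDeriv_smul hac]
  have hi : Integrable (fun x => (μ.rnDeriv ν x).toReal • g x) ν :=
    (integrable_rnDeriv_smul_iff hac).2 (aux_exp_bcf μ hg hM).1
  rw [← integral_sub hi (aux_exp_bcf ν hg hM).2]
  refine integral_mono (hi.sub (aux_exp_bcf ν hg hM).2) h2 fun x => ?_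
  exact aux_young ENNReal.toReal_nonneg _

lemma aux_exp_lip {a b M : ℝ} (ha : |a| ≤ M) (hb : |b| ≤ M) :
    Real.exp a - Real.exp b ≤ Real.exp M * |a - b| := by
  have h1 := Real.add_one_le_exp (b - a)
  rw [Real.exp_sub, le_div_iff₀ (Real.exp_pos a)] at h1
  have h2 : Real.exp a ≤ Real.exp M := Real.exp_le_exp.2 ((le_abs_self _).trans ha)
  have h3 := le_abs_self (a - b)
  have h4 := Real.exp_pos a
  have h5 := abs_nonneg (a - b)
  nlinarith

lemma aux_ext (μ ν : Measure I01) [IsProbabilityMeasure μ] [IsProbabilityMeasure ν] {C : ℝ}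
    (h : ∀ g : I01 → ℝ, Continuous g →
      ∫ x, g x ∂μ - ∫ x, (Real.exp (g x) - 1) ∂ν ≤ C)
    {g : I01 → ℝ} (hg : Measurable g) {M : ℝ} (hM : ∀ x, |g x| ≤ M) :
    ∫ x, g x ∂μ - ∫ x, (Real.exp (g x) - 1) ∂ν ≤ C := by
  have hM0 : 0 ≤ M := (abs_nonneg _).trans (hM ⟨0, by simp⟩)
  refine le_of_forall_pos_le_add fun ε hε => ?_
  have hE := Real.exp_pos M
  obtain ⟨f, hf, hfi⟩ := (aux_exp_bcf (μ + ν) hg hM).1.exists_boundedContinuous_integral_sub_le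
    (ε := ε / (1 + Real.exp M)) (by positivity)
  set k : I01 → ℝ := fun x => max (-M) (min M (f x)) with hk
  have hkc : Continuous k := by
    have := f.continuous
    fun_prop
  have hkM : ∀ x, |k x| ≤ M := fun x => by
    rw [abs_le]; exact ⟨le_max_left _ _, max_le (by linarith) (min_le_left _ _)⟩
  have hkf : ∀ x, |g x - k x| ≤ ‖g x - f x‖ := fun x => by
    obtain ⟨h1, h2⟩ := abs_le.1 (hM x)
    have : g x = max (-M) (min M (g x)) := by
      rw [min_eq_right h2, max_eq_right h1]
    calc |g x - k x| = |max (-M) (min M (g x)) - max (-M) (min M (f x))| := by rw [← this]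
      _ ≤ |min M (g x) - min M (f x)| := by
        simpa using abs_max_sub_max_le_max (-M) (min M (g x)) (-M) (min M (f x))
      _ ≤ |g x - f x| := by
        simpa using abs_min_sub_min_le_max M (g x) M (f x)
  have hgk : ∀ ρ : Measure I01, [IsFiniteMeasure ρ] → Integrable (fun x => |g x - k x|) ρ :=
    fun ρ _ => ((aux_exp_bcf ρ hg hM).1.sub (aux_exp_bcf ρ hkc.measurable hkM).1).abs
  have hsum : ∫ x, |g x - k x| ∂μ + ∫ x, |g x - k x| ∂ν ≤ ε / (1 + Real.exp M) := by
    rw [← integral_add_measure (hgk μ) (hgk ν)]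
    refine le_trans ?_ hf
    exact integral_mono (hgk _) (((aux_exp_bcf (μ + ν) hg hM).1.sub hfi).norm) hkf
  have e1 : ∫ x, g x ∂μ - ∫ x, k x ∂μ ≤ ∫ x, |g x - k x| ∂μ := by
    rw [← integral_sub (aux_exp_bcf μ hg hM).1 (aux_exp_bcf μ hkc.measurable hkM).1]
    exact integral_mono ((aux_exp_bcf μ hg hM).1.sub (aux_exp_bcf μ hkc.measurable hkM).1)
      (hgk μ) fun x => le_abs_self _
  have e2 : ∫ x, (Real.exp (k x) - 1) ∂ν - ∫ x, (Real.exp (g x) - 1) ∂ν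
      ≤ Real.exp M * ∫ x, |g x - k x| ∂ν := by
    rw [← integral_sub (aux_exp_bcf ν hkc.measurable hkM).2 (aux_exp_bcf ν hg hM).2,
      ← integral_const_mul]
    refine integral_mono ((aux_exp_bcf ν hkc.measurable hkM).2.sub (aux_exp_bcf ν hg hM).2)
      ((hgk ν).const_mul _) fun x => ?_
    have := aux_exp_lip (hkM x) (hM x)
    rw [abs_sub_comm] at this
    simpa using this
  have e3 := h k hkc
  rw [le_div_iff₀ (by positivity)] at hsum
  have n1 : 0 ≤ ∫ x, |g x - k x| ∂μ := integral_nonneg fun x => abs_nonneg _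
  have n2 : 0 ≤ ∫ x, |g x - k x| ∂ν := integral_nonneg fun x => abs_nonneg _
  nlinarith [mul_nonneg n1 hE.le]

lemma aux_clip {r : ℝ} (hr : 0 ≤ r) (n : ℕ) :
    0 ≤ r * Real.log (max (Real.exp (-n)) (min r (Real.exp n)))
      - (Real.exp (Real.log (max (Real.exp (-n)) (min r (Real.exp n)))) - 1) := by
  set m := max (Real.exp (-n)) (min r (Real.exp n)) with hm
  have hm0 : 0 < m := lt_of_lt_of_le (Real.exp_pos _) (le_max_left _ _)
  rw [Real.exp_log hm0]
  have hk := InformationTheory.klFun_nonneg hm0.le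
  unfold InformationTheory.klFun at hk
  have hn : (0 : ℝ) ≤ n := Nat.cast_nonneg n
  have e1 : Real.exp (-n) ≤ 1 := Real.exp_le_one_iff.2 (by linarith)
  have e2 : 1 ≤ Real.exp n := Real.one_le_exp hn
  have key : 0 ≤ (r - m) * Real.log m := by
    rcases le_total r (Real.exp n) with h | h
    · rw [min_eq_left h] at hm
      rcases le_total (Real.exp (-n)) r with h' | h'
      · rw [max_eq_right h'] at hm; simp [hm]
      · rw [max_eq_left h'] at hm
        rw [hm, Real.log_exp]; nlinarith
    · rw [min_eq_right h, max_eq_right (e1.trans e2)] at hm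
      rw [hm, Real.log_exp]; nlinarith
  nlinarith

lemma aux_clip_tendsto {r : ℝ} (hr : 0 ≤ r) :
    Tendsto (fun n : ℕ => r * Real.log (max (Real.exp (-n)) (min r (Real.exp n)))
      - (Real.exp (Real.log (max (Real.exp (-n)) (min r (Real.exp n)))) - 1)) atTop
      (𝓝 (InformationTheory.klFun r)) := by
  have t0 : Tendsto (fun n : ℕ => Real.exp (-(n : ℝ))) atTop (𝓝 0) :=
    Real.tendsto_exp_neg_atTop_nhds_zero.comp tendsto_natCast_atTop_atTop
  have t1 : Tendsto (fun n : ℕ => Real.exp (n : ℝ)) atTop atTop :=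
    Real.tendsto_exp_atTop.comp tendsto_natCast_atTop_atTop
  have tm : Tendsto (fun n : ℕ => max (Real.exp (-n)) (min r (Real.exp n))) atTop (𝓝 r) := by
    have : Tendsto (fun n : ℕ => max (Real.exp (-n)) r) atTop (𝓝 (max 0 r)) :=
      t0.max tendsto_const_nhds
    rw [max_eq_right hr] at this
    refine this.congr' ?_
    filter_upwards [t1.eventually_ge_atTop r] with n hn
    rw [min_eq_left hn]
  have hpos : ∀ n : ℕ, 0 < max (Real.exp (-n)) (min r (Real.exp n)) := fun n =>
    lt_of_lt_of_le (Real.exp_pos _) (le_max_left _ _)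
  simp_rw [Real.exp_log (hpos _)]
  unfold InformationTheory.klFun
  rw [show r * Real.log r + 1 - r = r * Real.log r - (r - 1) by ring]
  refine Tendsto.sub ?_ (tm.sub_const 1)
  rcases hr.eq_or_lt with rfl | hr
  · simp
  · exact (tm.log hr.ne').const_mul r

lemma aux_lower (μ ν : Measure I01) [IsProbabilityMeasure μ] [IsProbabilityMeasure ν] {c : ℝ}
    (h : ∀ g : I01 → ℝ, Continuous g →
      ∫ x, g x ∂μ - ∫ x, (Real.exp (g x) - 1) ∂ν ≤ c * Real.log 2) :
    klDiv2 μ ν ≤ (c : EReal) := by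
  have hac : μ ≪ ν := by
    refine Measure.AbsolutelyContinuous.mk fun s hs hν => ?_
    by_contra hμ
    have hpos : 0 < μ.real s := ENNReal.toReal_pos hμ (measure_ne_top _ _)
    obtain ⟨n, hn⟩ := exists_nat_gt (c * Real.log 2 / μ.real s)
    rw [div_lt_iff₀ hpos] at hn
    have h1 := aux_ext μ ν h (g := s.indicator fun _ => (n : ℝ))
      (measurable_const.indicator hs) (M := n) (fun x => by
        by_cases hx : x ∈ s <;> simp [hx])
    have h2 : ∫ x, (Real.exp (s.indicator (fun _ => (n : ℝ)) x) - 1) ∂ν = 0 := by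
      refine integral_eq_zero_of_ae ?_
      have : ∀ᵐ x ∂ν, x ∉ s := measure_eq_zero_iff_ae_notMem.1 hν
      filter_upwards [this] with x hx
      simp [hx]
    rw [h2, integral_indicator_const _ hs, smul_eq_mul] at h1
    linarith
  set r : I01 → ℝ := fun x => (μ.rnDeriv ν x).toReal with hr
  have hrm : Measurable r := (Measure.measurable_rnDeriv μ ν).ennreal_toReal
  set G : ℕ → I01 → ℝ := fun n x => Real.log (max (Real.exp (-n)) (min (r x) (Real.exp n))) with hG
  have hGm : ∀ n, Measurable (G n) := fun n => by fun_prop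
  have hGb : ∀ n x, |G n x| ≤ n := fun n x => by
    have hn : (0 : ℝ) ≤ n := Nat.cast_nonneg n
    have hpos : 0 < max (Real.exp (-n)) (min (r x) (Real.exp n)) :=
      lt_of_lt_of_le (Real.exp_pos _) (le_max_left _ _)
    rw [abs_le]
    constructor
    · rw [Real.le_log_iff_exp_le hpos]; exact le_max_left _ _
    · rw [Real.log_le_iff_le_exp hpos]
      exact max_le (Real.exp_le_exp.2 (by linarith)) (min_le_right _ _)
  have hJ : ∀ n, ∫⁻ x, ENNReal.ofReal (r x * G n x - (Real.exp (G n x) - 1)) ∂ν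
      ≤ ENNReal.ofReal (c * Real.log 2) := fun n => by
    have hi : Integrable (fun x => (μ.rnDeriv ν x).toReal • G n x) ν :=
      (integrable_rnDeriv_smul_iff hac).2 (aux_exp_bcf μ (hGm n) (hGb n)).1
    have hi2 := hi.sub (aux_exp_bcf ν (hGm n) (hGb n)).2
    have h1 := aux_ext μ ν h (hGm n) (hGb n)
    rw [← integral_rnDeriv_smul hac, ← integral_sub hi (aux_exp_bcf ν (hGm n) (hGb n)).2] at h1
    have h2 := ofReal_integral_eq_lintegral_ofReal hi2
      (ae_of_all _ fun x => aux_clip (r := r x) ENNReal.toReal_nonneg n)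
    refine le_trans (le_of_eq ?_) (ENNReal.ofReal_le_ofReal h1)
    exact h2.symm
  have hF : ∫⁻ x, ENNReal.ofReal (InformationTheory.klFun (r x)) ∂ν
      ≤ ENNReal.ofReal (c * Real.log 2) := by
    have hlim : ∀ x, liminf (fun n => ENNReal.ofReal (r x * G n x - (Real.exp (G n x) - 1))) atTop
        = ENNReal.ofReal (InformationTheory.klFun (r x)) := fun x =>
      (ENNReal.tendsto_ofReal (aux_clip_tendsto (r := r x) ENNReal.toReal_nonneg)).liminf_eq
    calc _ = ∫⁻ x, liminf (fun n =>
            ENNReal.ofReal (r x * G n x - (Real.exp (G n x) - 1))) atTop ∂ν := by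
          simp_rw [hlim]
      _ ≤ liminf (fun n => ∫⁻ x,
            ENNReal.ofReal (r x * G n x - (Real.exp (G n x) - 1)) ∂ν) atTop :=
          lintegral_liminf_le fun n => by fun_prop
      _ ≤ _ := liminf_le_of_frequently_le' (Eventually.of_forall hJ).frequently
  have hc0 : 0 ≤ c * Real.log 2 := by
    have := h (fun _ => 0) continuous_const
    simpa using this
  have hkl : InformationTheory.klDiv μ ν ≤ ENNReal.ofReal (c * Real.log 2) := by
    rw [InformationTheory.klDiv_eq_lintegral_klFun_of_ac hac]; exact hF
  have hne : InformationTheory.klDiv μ ν ≠ ⊤ := ne_top_of_le_ne_top ENNReal.ofReal_ne_top hkl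
  obtain ⟨-, hint⟩ := InformationTheory.klDiv_ne_top_iff.1 hne
  rw [aux_klDiv2_le]
  refine ⟨hac, hint, ?_⟩
  have := InformationTheory.toReal_klDiv_of_measure_eq hac (by simp)
  rw [← this]
  exact ENNReal.toReal_le_of_le_ofReal hc0 hkl

lemma aux_lsc {f : I01 → ℝ≥0∞} (hf : LowerSemicontinuous f) {μs : ℕ → ProbabilityMeasure I01}
    {μ : ProbabilityMeasure I01} (h : Tendsto μs atTop (𝓝 μ)) :
    ∫⁻ x, f x ∂(μ : Measure I01)
      ≤ liminf (fun i => ∫⁻ x, f x ∂(μs i : Measure I01)) atTop := by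
  have hfm : Measurable f := hf.measurable
  have hopen : ∀ G, IsOpen G → (μ : Measure I01) G
      ≤ liminf (fun i => (μs i : Measure I01) G) atTop := fun G hG =>
    ProbabilityMeasure.le_liminf_measure_open_of_tendsto h hG
  have hsup : ∀ x, f x = ⨆ n : ℕ, min (f x) n := fun x => by
    rw [← inf_iSup_eq, ENNReal.iSup_natCast, inf_top_eq]
  have hmono : ∫⁻ x, f x ∂(μ : Measure I01)
      = ⨆ n : ℕ, ∫⁻ x, min (f x) n ∂(μ : Measure I01) := by
    rw [← lintegral_iSup (f := fun (n : ℕ) x => min (f x) (n : ℝ≥0∞))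
      (fun n => hfm.min measurable_const)
      (fun m n hmn x => min_le_min_left _ (by exact_mod_cast hmn))]
    exact lintegral_congr hsup
  rw [hmono]
  refine iSup_le fun n => ?_
  have hne : ∀ x, min (f x) n ≠ ⊤ := fun x =>
    ne_top_of_le_ne_top (ENNReal.natCast_ne_top n) (min_le_right _ _)
  have hlay : ∀ ρ : Measure I01, ∫⁻ x, min (f x) n ∂ρ
      = ∫⁻ t in Set.Ioi (0 : ℝ), ρ {x | t < (min (f x) n).toReal} := fun ρ => by
    rw [← lintegral_eq_lintegral_meas_lt ρ (ae_of_all _ fun x => ENNReal.toReal_nonneg)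
      (by fun_prop)]
    exact lintegral_congr fun x => (ENNReal.ofReal_toReal (hne x)).symm
  have hop : ∀ t : ℝ, 0 < t → IsOpen {x | t < (min (f x) n).toReal} := fun t ht => by
    have : {x | t < (min (f x) n).toReal}
        = f ⁻¹' Set.Ioi (ENNReal.ofReal t) ∩ {x | ENNReal.ofReal t < n} := by
      ext x
      simp only [Set.mem_setOf_eq, Set.mem_inter_iff, Set.mem_preimage, Set.mem_Ioi]
      rw [← lt_min_iff, ENNReal.ofReal_lt_iff_lt_toReal ht.le (hne x)]
    rw [this]
    exact (hf.isOpen_preimage _).inter isOpen_const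
  calc _ = ∫⁻ t in Set.Ioi (0 : ℝ), (μ : Measure I01) {x | t < (min (f x) n).toReal} := hlay _
    _ ≤ ∫⁻ t in Set.Ioi (0 : ℝ),
        liminf (fun i => (μs i : Measure I01) {x | t < (min (f x) n).toReal}) atTop :=
      setLIntegral_mono' measurableSet_Ioi fun t ht => hopen _ (hop t ht)
    _ ≤ liminf (fun i => ∫⁻ t in Set.Ioi (0 : ℝ),
        (μs i : Measure I01) {x | t < (min (f x) n).toReal}) atTop :=
      lintegral_liminf_le (fun i => Antitone.measurable fun s t hst =>
        measure_mono fun x hx => lt_of_le_of_lt hst hx)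
    _ ≤ _ := by
      refine liminf_le_liminf (Eventually.of_forall fun i => ?_)
      rw [← hlay]
      exact lintegral_mono fun x => min_le_left _ _

lemma aux_mix_prob (p : ℝ) (hp : p ∈ Set.Ioo (0 : ℝ) 1) (μ ν : Measure I01)
    [IsProbabilityMeasure μ] [IsProbabilityMeasure ν] : IsProbabilityMeasure (mix p μ ν) := by
  constructor
  simp only [mix, Measure.coe_add, Measure.coe_smul, Pi.add_apply, Pi.smul_apply, measure_univ,
    smul_eq_mul, mul_one]
  rw [← ENNReal.ofReal_add hp.1.le (by linarith [hp.2])]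
  simp

lemma aux_Fp_ge (p : ℝ) (hp : p ∈ Set.Ioo (0 : ℝ) 1) (μ ν : Measure I01)
    [IsProbabilityMeasure μ] [IsProbabilityMeasure ν] :
    klDiv2 μ (mix p μ ν) ≤ Fp p μ ν := by
  have := aux_mix_prob p hp μ ν
  rw [Fp, if_neg hp.1.ne']
  refine le_add_of_nonneg_right (mul_nonneg ?_ (aux_klDiv2_nonneg _ _))
  have : 0 ≤ (1 - p) / p := div_nonneg (by linarith [hp.2]) hp.1.le
  exact_mod_cast this

lemma aux_integral_mix (p : ℝ) (hp : p ∈ Set.Ioo (0 : ℝ) 1) (μ ν : Measure I01)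
    [IsProbabilityMeasure μ] [IsProbabilityMeasure ν] {f : I01 → ℝ}
    (h1 : Integrable f μ) (h2 : Integrable f ν) :
    ∫ x, f x ∂(mix p μ ν) = p * ∫ x, f x ∂μ + (1 - p) * ∫ x, f x ∂ν := by
  rw [mix, integral_add_measure (h1.smul_measure ENNReal.ofReal_ne_top)
    (h2.smul_measure ENNReal.ofReal_ne_top), integral_smul_measure, integral_smul_measure,
    ENNReal.toReal_ofReal hp.1.le, ENNReal.toReal_ofReal (by linarith [hp.2])]
  rfl

lemma aux_limit (pj : ℕ → ℝ) (hpj : ∀ j, pj j ∈ Set.Ioo (0 : ℝ) 1)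
    (hpj0 : Tendsto pj atTop (𝓝 0)) (μs νs : ℕ → ProbabilityMeasure I01)
    {μ ν : ProbabilityMeasure I01} (hμ : Tendsto μs atTop (𝓝 μ)) (hν : Tendsto νs atTop (𝓝 ν))
    {L : EReal} (hopt : limsup (fun j => Fp (pj j) (μs j : Measure I01) (νs j : Measure I01)) atTop
      ≤ L) : klDiv2 (μ : Measure I01) (ν : Measure I01) ≤ L := by
  refine EReal.le_of_forall_lt_iff_le.1 fun c hc => ?_
  have hev := eventually_lt_of_limsup_lt (hopt.trans_lt hc)
  refine aux_lower _ _ fun g hg => ?_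
  let gb : BoundedContinuousFunction I01 ℝ := BoundedContinuousFunction.mkOfCompact ⟨g, hg⟩
  let eb : BoundedContinuousFunction I01 ℝ :=
    BoundedContinuousFunction.mkOfCompact ⟨fun x => Real.exp (g x) - 1, by fun_prop⟩
  have hb : ∀ x, |g x| ≤ ‖gb‖ := fun x => gb.norm_coe_le_norm x
  have tg := ProbabilityMeasure.tendsto_iff_forall_integral_tendsto.1 hμ gb
  have te := ProbabilityMeasure.tendsto_iff_forall_integral_tendsto.1 hμ eb
  have te' := ProbabilityMeasure.tendsto_iff_forall_integral_tendsto.1 hν eb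
  have tt := tg.sub ((hpj0.mul te).add ((hpj0.const_sub 1).mul te'))
  simp only [zero_mul, zero_add, sub_zero, one_mul] at tt
  refine le_of_tendsto tt ?_
  filter_upwards [hev] with j hj
  have := aux_mix_prob (pj j) (hpj j) (μs j : Measure I01) (νs j : Measure I01)
  have h1 := aux_upper _ _ ((aux_Fp_ge (pj j) (hpj j) _ _).trans hj.le) hg.measurable hb
  rwa [aux_integral_mix _ (hpj j) _ _ (aux_exp_bcf _ hg.measurable hb).2
    (aux_exp_bcf _ hg.measurable hb).2] at h1

theorem stmt_7
    (dK dN : I01 → ℝ≥0∞)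
    (hdK_lsc : LowerSemicontinuous dK) (hdN_lsc : LowerSemicontinuous dN)
    (hdK1 : dK ⟨1, Set.right_mem_Icc.mpr zero_le_one⟩ = 0)
    (hdN0 : dN ⟨0, Set.left_mem_Icc.mpr zero_le_one⟩ = 0)
    (hc : ∃ c : I01, dK c ≠ ⊤ ∧ dN c ≠ ⊤)
    (εK εN : ℝ) (hεK : 0 ≤ εK) (hεN : 0 ≤ εN)
    -- (μK*, μN*) is the UNIQUE minimizer of KL over the feasible region
    (μKs μNs : ProbabilityMeasure I01)
    (hfeas : FeasibleP dK dN εK εN μKs μNs)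
    (hmin : ∀ μK μN : ProbabilityMeasure I01, FeasibleP dK dN εK εN μK μN →
      klDiv2 (μKs : Measure I01) (μNs : Measure I01) ≤ klDiv2 (μK : Measure I01) (μN : Measure I01))
    (huniq : ∀ μK μN : ProbabilityMeasure I01, FeasibleP dK dN εK εN μK μN →
      klDiv2 (μK : Measure I01) (μN : Measure I01)
          = klDiv2 (μKs : Measure I01) (μNs : Measure I01) →
      μK = μKs ∧ μN = μNs)
    -- the sequence: p_j → 0, asymptotically feasible, asymptotically optimal
    (pj : ℕ → ℝ) (hpj : ∀ j, pj j ∈ Set.Ioo (0 : ℝ) 1) (hpj0 : Tendsto pj atTop (nhds 0))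
    (μKj μNj : ℕ → ProbabilityMeasure I01)
    (hEK : Filter.limsup (fun j => ∫⁻ x, dK x ∂((μKj j) : Measure I01)) atTop
      ≤ ENNReal.ofReal εK)
    (hEN : Filter.limsup (fun j => ∫⁻ x, dN x ∂((μNj j) : Measure I01)) atTop
      ≤ ENNReal.ofReal εN)
    (hopt : Filter.limsup
        (fun j => Fp (pj j) ((μKj j) : Measure I01) ((μNj j) : Measure I01)) atTop
      ≤ klDiv2 (μKs : Measure I01) (μNs : Measure I01)) :
    Tendsto μKj atTop (nhds μKs) ∧ Tendsto μNj atTop (nhds μNs) := by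
  have key : Tendsto (fun j => (μKj j, μNj j)) atTop (𝓝 (μKs, μNs)) := by
    refine tendsto_of_subseq_tendsto fun ns hns => ?_
    obtain ⟨⟨μ, ν⟩, -, φ, hφ, hlim⟩ := (isCompact_univ (X := ProbabilityMeasure I01 ×
      ProbabilityMeasure I01)).tendsto_subseq (x := fun n => (μKj (ns n), μNj (ns n)))
      (fun n => Set.mem_univ _)
    refine ⟨φ, ?_⟩
    have hs : Tendsto (fun n => ns (φ n)) atTop atTop := hns.comp hφ.tendsto_atTop
    have hμ : Tendsto (fun n => μKj (ns (φ n))) atTop (𝓝 μ) :=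
      (continuous_fst.tendsto _).comp hlim
    have hν : Tendsto (fun n => μNj (ns (φ n))) atTop (𝓝 ν) :=
      (continuous_snd.tendsto _).comp hlim
    have hf : FeasibleP dK dN εK εN μ ν := by
      constructor
      · exact (aux_lsc hdK_lsc hμ).trans ((liminf_le_limsup (f := atTop)).trans
          ((limsup_le_limsup_of_le (f := map (fun n => ns (φ n)) atTop) hs).trans hEK))
      · exact (aux_lsc hdN_lsc hν).trans ((liminf_le_limsup (f := atTop)).trans
          ((limsup_le_limsup_of_le (f := map (fun n => ns (φ n)) atTop) hs).trans hEN))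
    have hle : klDiv2 (μ : Measure I01) (ν : Measure I01)
        ≤ klDiv2 (μKs : Measure I01) (μNs : Measure I01) :=
      aux_limit (fun n => pj (ns (φ n))) (fun n => hpj _) (hpj0.comp hs) _ _ hμ hν
        ((limsup_le_limsup_of_le (f := map (fun n => ns (φ n)) atTop) hs).trans hopt)
    obtain ⟨rfl, rfl⟩ := huniq μ ν hf (le_antisymm hle (hmin μ ν hf))
    exact hlim
  exact ⟨(continuous_fst.tendsto _).comp key, (continuous_snd.tendsto _).comp key⟩
end
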